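/- Let S and A be nonempty finite types, P : S → A → PMF S a transition kernel, ρ0 a probability distribution on S, and γ ∈ [0,1). Let π and π' be policies with π(a|s) > 0 for all s, a, let σ ≥ 0, let R_e : S × A → ℝ be a reward function, g : S × A → ℝ any function and δ ∈ ℝ, and set R_i(s,a) = min{g(s,a) − δ, 0} and R(s,a) = R_e(s,a) + σ R_i(s,a). For any function f : S → ℝ define δ_f(s,a,s') = R(s,a) + γ f(s') − f(s), ε_f^{π'} = max_s |Σ_a π'(a|s) Σ_{s'} P(s'|s,a) δ_f(s,a,s')|, and T_{π,f}(π') = Σ_s d^π(s) Σ_a π(a|s) Σ_{s'} P(s'|s,a) (π'(a|s)/π(a|s) − 1) δ_f(s,a,s'). Then J_R(π') − J_R(π) ≥ T_{π,f}(π')/(1−γ) − (2γ ε_f^{π'}/(1−γ)²) · Σ_s d^π(s) D_TV(π'‖π)[s]. -/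

import Mathlib

open scoped BigOperators

section MDPdefs

variable {S A : Type*} [Fintype S] [Fintype A]

/-- The state-marginal distribution at time `t` under policy `π`:
`ρ_0 = ρ0` and `ρ_{t+1}(s') = ∑_s ∑_a ρ_t(s) π(a|s) P(s'|s,a)`. -/
noncomputable def stateMarginal (P : S → A → PMF S) (ρ0 : PMF S) (π : S → PMF A) :
    ℕ → S → ℝ
  | 0, s => (ρ0 s).toReal
  | t + 1, s' => ∑ s : S, ∑ a : A,
      stateMarginal P ρ0 π t s * (π s a).toReal * (P s a s').toReal

/-- The discounted state visitation distribution `d^π(s) = (1-γ) ∑_t γ^t ρ_t^π(s)`. -/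
noncomputable def dVisit (P : S → A → PMF S) (ρ0 : PMF S) (γ : ℝ) (π : S → PMF A)
    (s : S) : ℝ :=
  (1 - γ) * ∑' t : ℕ, γ ^ t * stateMarginal P ρ0 π t s

/-- The discounted return `J_R(π) = ∑_t γ^t ∑_s ∑_a ρ_t^π(s) π(a|s) R(s,a)`. -/
noncomputable def Jret (P : S → A → PMF S) (ρ0 : PMF S) (γ : ℝ) (π : S → PMF A)
    (R : S → A → ℝ) : ℝ :=
  ∑' t : ℕ, γ ^ t * ∑ s : S, ∑ a : A,
      stateMarginal P ρ0 π t s * (π s a).toReal * R s a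

/-- Total variational divergence between the action distributions of two policies at `s`. -/
noncomputable def dTV (π' π : S → PMF A) (s : S) : ℝ :=
  (1 / 2) * ∑ a : A, |(π' s a).toReal - (π s a).toReal|

/-- Value function of `π` with reward `R`: expected discounted return started at `s`. -/
noncomputable def Vval (P : S → A → PMF S) (γ : ℝ) (π : S → PMF A) (R : S → A → ℝ)
    (s : S) : ℝ :=
  Jret P (PMF.pure s) γ π R

/-- State-action value function `Q^π_R(s,a) = R(s,a) + γ ∑_{s'} P(s'|s,a) V^π_R(s')`. -/
noncomputable def Qval (P : S → A → PMF S) (γ : ℝ) (π : S → PMF A) (R : S → A → ℝ)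
    (s : S) (a : A) : ℝ :=
  R s a + γ * ∑ s' : S, (P s a s').toReal * Vval P γ π R s'

/-- Advantage function `A^π_R(s,a) = Q^π_R(s,a) - V^π_R(s)`. -/
noncomputable def Aadv (P : S → A → PMF S) (γ : ℝ) (π : S → PMF A) (R : S → A → ℝ)
    (s : S) (a : A) : ℝ :=
  Qval P γ π R s a - Vval P γ π R s

/-- Kullback–Leibler divergence between the action distributions at state `s`. -/
noncomputable def dKL (π' π : S → PMF A) (s : S) : ℝ :=
  ∑ a : A, (π' s a).toReal * Real.log ((π' s a).toReal / (π s a).toReal)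

end MDPdefs

/-!
Averaging over actions turns a policy `π` into a row-stochastic matrix `K` on states, and `d = d^π`
solves the discounted flow equation `d = (1 - γ) ρ0 + γ d K`. Pairing this equation with `f` shows
that the mean TD error `G` of `π` satisfies `d · G = (1 - γ) (J(π) - ρ0 · f)`, so with primes for
`π'`,
  `(1 - γ) (J(π') - J(π)) = d · (G' - G) + (d' - d) · G'`.
The first term is the importance-weighted surrogate. The second is at most `‖d' - d‖₁ ε`, and
subtracting the two flow equations, `d' - d = γ ((d' - d) K' + d (K' - K))`, gives
`(1 - γ) ‖d' - d‖₁ ≤ 2 γ d · D_TV`, because `K'` is an `ℓ¹`-contraction.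
-/

section FiniteSums

open Matrix

variable {m n : Type*} [Fintype m] [Fintype n]

lemma sum_toReal_pmf (p : PMF n) : ∑ i, (p i).toReal = 1 := by
  rw [← ENNReal.toReal_sum fun i _ => p.apply_ne_top i, ← tsum_fintype (L := .unconditional n),
    p.tsum_coe, ENNReal.toReal_one]

lemma sum_toReal_mul_importance_weight {p q : PMF n} (hqp : q.support ⊆ p.support) (x : n → ℝ) :
    ∑ i, (p i).toReal * (((q i).toReal / (p i).toReal - 1) * x i) =
      ∑ i, (q i).toReal * x i - ∑ i, (p i).toReal * x i := by
  rw [← Finset.sum_sub_distrib]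
  refine Finset.sum_congr rfl fun i _ => ?_
  have hzero : (p i).toReal = 0 → (q i).toReal = 0 := fun hp => by
    have hpi : p i = 0 := (ENNReal.toReal_eq_zero_iff _).1 hp |>.resolve_right (p.apply_ne_top i)
    have hqi : q i = 0 := of_not_not fun hq => hqp hq hpi
    rw [hqi, ENNReal.toReal_zero]
  rw [← mul_assoc, mul_sub, mul_div_cancel_of_imp' hzero, mul_one, sub_mul]

lemma abs_dotProduct_le_sum_abs_mul_iSup_abs (v w : n → ℝ) :
    |v ⬝ᵥ w| ≤ (∑ i, |v i|) * ⨆ i, |w i| := by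
  rw [Finset.sum_mul]
  refine (Finset.abs_sum_le_sum_abs _ _).trans (Finset.sum_le_sum fun i _ => ?_)
  rw [abs_mul]
  gcongr
  exact le_ciSup (f := fun i => |w i|) (Set.finite_range _).bddAbove i

lemma sum_abs_vecMul_le (v : m → ℝ) (M : Matrix m n ℝ) :
    ∑ j, |(v ᵥ* M) j| ≤ ∑ i, |v i| * ∑ j, |M i j| :=
  calc ∑ j, |(v ᵥ* M) j|
      ≤ ∑ j, ∑ i, |v i * M i j| := Finset.sum_le_sum fun _ _ => Finset.abs_sum_le_sum_abs _ _
    _ = ∑ i, |v i| * ∑ j, |M i j| := by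
        rw [Finset.sum_comm]
        simp only [abs_mul, Finset.mul_sum]

lemma sum_abs_sub_le_of_discounted_flow {γ : ℝ} (hγ : 0 ≤ γ) {μ d d' : n → ℝ}
    {K K' : Matrix n n ℝ} (hK' : ∀ i, ∑ j, |K' i j| ≤ 1)
    (hd : d = μ + γ • (d ᵥ* K)) (hd' : d' = μ + γ • (d' ᵥ* K')) :
    (1 - γ) * ∑ i, |d' i - d i| ≤ γ * ∑ i, |d i| * ∑ j, |K' i j - K i j| := by
  have hsub : d' - d = γ • ((d' - d) ᵥ* K' + d ᵥ* (K' - K)) := by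
    calc d' - d = (μ + γ • (d' ᵥ* K')) - (μ + γ • (d ᵥ* K)) := by rw [← hd, ← hd']
      _ = γ • ((d' - d) ᵥ* K' + d ᵥ* (K' - K)) := by
        rw [add_sub_add_left_eq_sub, ← smul_sub, sub_vecMul, vecMul_sub, sub_add_sub_cancel]
  have hcontract : ∑ j, |((d' - d) ᵥ* K') j| ≤ ∑ i, |d' i - d i| :=
    (sum_abs_vecMul_le _ _).trans <| Finset.sum_le_sum fun i _ =>
      mul_le_of_le_one_right (abs_nonneg _) (hK' i)
  have hbound : ∑ i, |d' i - d i| ≤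
      γ * (∑ i, |d' i - d i| + ∑ i, |d i| * ∑ j, |K' i j - K i j|) :=
    calc ∑ i, |d' i - d i|
        = γ * ∑ j, |((d' - d) ᵥ* K') j + (d ᵥ* (K' - K)) j| := by
          rw [Finset.mul_sum]
          refine Finset.sum_congr rfl fun j _ => ?_
          rw [← Pi.sub_apply, congrFun hsub j, Pi.smul_apply, Pi.add_apply, smul_eq_mul, abs_mul,
            abs_of_nonneg hγ]
      _ ≤ γ * (∑ j, |((d' - d) ᵥ* K') j| + ∑ j, |(d ᵥ* (K' - K)) j|) := by
          rw [← Finset.sum_add_distrib]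
          gcongr
          exact abs_add_le _ _
      _ ≤ γ * (∑ i, |d' i - d i| + ∑ i, |d i| * ∑ j, |K' i j - K i j|) := by
          exact mul_le_mul_of_nonneg_left
            (add_le_add hcontract (sum_abs_vecMul_le d (K' - K))) hγ
  linarith

end FiniteSums

section PolicyEvaluation

open Matrix

variable {S A : Type*} [Fintype S] [Fintype A]

/-- The state-to-state transition matrix of the Markov chain obtained by following `π`. -/
noncomputable def policyTransition (P : S → A → PMF S) (π : S → PMF A) : Matrix S S ℝ :=
  Matrix.of fun s s' => ∑ a, (π s a).toReal * (P s a s').toReal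

/-- The expected one-step reward in each state when the action is drawn from `π`. -/
noncomputable def policyReward (π : S → PMF A) (R : S → A → ℝ) (s : S) : ℝ :=
  ∑ a, (π s a).toReal * R s a

/-- The expected temporal-difference error `R(s,a) + γ f(s') - f(s)` in each state `s`, with the
action drawn from `π` and the successor `s'` from `P`; its largest absolute value is `ε_f^π`. -/
noncomputable def meanTDError (P : S → A → PMF S) (γ : ℝ) (π : S → PMF A) (R : S → A → ℝ)
    (f : S → ℝ) (s : S) : ℝ :=
  ∑ a, (π s a).toReal * ∑ s', (P s a s').toReal * (R s a + γ * f s' - f s)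

variable (P : S → A → PMF S) (ρ0 : PMF S) {γ : ℝ} (π π' : S → PMF A) (R : S → A → ℝ) (f : S → ℝ)

lemma policyTransition_mem_rowStochastic [DecidableEq S] :
    policyTransition P π ∈ rowStochastic ℝ S := by
  refine mem_rowStochastic_iff_sum.2 ⟨fun s s' => ?_, fun s => ?_⟩
  · exact Finset.sum_nonneg fun a _ => mul_nonneg ENNReal.toReal_nonneg ENNReal.toReal_nonneg
  · simp only [policyTransition, of_apply]
    rw [Finset.sum_comm]
    simp only [← Finset.mul_sum, sum_toReal_pmf, mul_one]

lemma sum_abs_policyTransition (s : S) : ∑ s', |policyTransition P π s s'| = 1 := by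
  classical
  have hK := policyTransition_mem_rowStochastic P π
  simp only [abs_of_nonneg (nonneg_of_mem_rowStochastic hK), sum_row_of_mem_rowStochastic hK]

lemma sum_abs_policyTransition_sub_le (s : S) :
    ∑ s', |policyTransition P π' s s' - policyTransition P π s s'| ≤ 2 * dTV π' π s := by
  let v : A → ℝ := fun a => (π' s a).toReal - (π s a).toReal
  let M : Matrix A S ℝ := Matrix.of fun a s' => (P s a s').toReal
  have hsub (s' : S) :
      policyTransition P π' s s' - policyTransition P π s s' = (v ᵥ* M) s' := by
    simp only [policyTransition, of_apply, vecMul, dotProduct, v, M, sub_mul,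
      Finset.sum_sub_distrib]
  calc ∑ s', |policyTransition P π' s s' - policyTransition P π s s'|
      = ∑ s', |(v ᵥ* M) s'| := by simp only [hsub]
    _ ≤ ∑ a, |v a| * ∑ s', |M a s'| := sum_abs_vecMul_le v M
    _ = 2 * dTV π' π s := by
        simp only [M, of_apply, abs_of_nonneg ENNReal.toReal_nonneg, sum_toReal_pmf, mul_one, dTV,
          v]
        ring

lemma meanTDError_eq :
    meanTDError P γ π R f = policyReward π R + γ • (policyTransition P π *ᵥ f) - f := by
  funext s
  have hmulVec : (policyTransition P π *ᵥ f) s =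
      ∑ a, (π s a).toReal * ∑ s', (P s a s').toReal * f s' := by
    simp only [mulVec, dotProduct, policyTransition, of_apply, Finset.sum_mul, Finset.mul_sum,
      mul_assoc]
    exact Finset.sum_comm
  simp only [meanTDError, Pi.sub_apply, Pi.add_apply, Pi.smul_apply, smul_eq_mul, hmulVec,
    policyReward, mul_add, mul_sub, Finset.sum_add_distrib, Finset.sum_sub_distrib,
    ← Finset.sum_mul, sum_toReal_pmf, one_mul, Finset.mul_sum, mul_left_comm]

lemma sum_importance_weighted_tdError_eq_sub {s : S} (hs : (π' s).support ⊆ (π s).support) :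
    ∑ a, (π s a).toReal * ∑ s', (P s a s').toReal *
        (((π' s a).toReal / (π s a).toReal - 1) * (R s a + γ * f s' - f s)) =
      meanTDError P γ π' R f s - meanTDError P γ π R f s := by
  simp only [mul_left_comm (P s _ _).toReal, ← Finset.mul_sum]
  exact sum_toReal_mul_importance_weight hs _

lemma stateMarginal_succ (t : ℕ) :
    stateMarginal P ρ0 π (t + 1) = stateMarginal P ρ0 π t ᵥ* policyTransition P π := by
  funext s'
  simp only [stateMarginal, vecMul, dotProduct, policyTransition, of_apply, Finset.mul_sum,
    mul_assoc]

lemma stateMarginal_nonneg (t : ℕ) (s : S) : 0 ≤ stateMarginal P ρ0 π t s := by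
  classical
  induction t generalizing s with
  | zero => exact ENNReal.toReal_nonneg
  | succ t ih =>
    rw [stateMarginal_succ]
    exact nonneg_vecMul_of_mem_rowStochastic (policyTransition_mem_rowStochastic P π) ih s

lemma stateMarginal_dotProduct_one (t : ℕ) : stateMarginal P ρ0 π t ⬝ᵥ 1 = 1 := by
  classical
  induction t with
  | zero => exact (dotProduct_one _).trans (sum_toReal_pmf ρ0)
  | succ t ih =>
    rw [stateMarginal_succ]
    exact vecMul_dotProduct_one_eq_one_rowStochastic (policyTransition_mem_rowStochastic P π) ih

lemma stateMarginal_le_one (t : ℕ) (s : S) : stateMarginal P ρ0 π t s ≤ 1 := by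
  rw [← stateMarginal_dotProduct_one P ρ0 π t, dotProduct_one]
  exact Finset.single_le_sum (fun i _ => stateMarginal_nonneg P ρ0 π t i) (Finset.mem_univ s)

lemma hasSum_dVisit (hγ0 : 0 ≤ γ) (hγ1 : γ < 1) (s : S) :
    HasSum (fun t : ℕ => (1 - γ) * (γ ^ t * stateMarginal P ρ0 π t s)) (dVisit P ρ0 γ π s) := by
  have hsummable : Summable fun t : ℕ => γ ^ t * stateMarginal P ρ0 π t s :=
    .of_nonneg_of_le
      (fun t => mul_nonneg (pow_nonneg hγ0 t) (stateMarginal_nonneg P ρ0 π t s))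
      (fun t => mul_le_of_le_one_right (pow_nonneg hγ0 t) (stateMarginal_le_one P ρ0 π t s))
      (summable_geometric_of_lt_one hγ0 hγ1)
  exact hsummable.hasSum.mul_left (1 - γ)

lemma hasSum_dVisit_dotProduct (hγ0 : 0 ≤ γ) (hγ1 : γ < 1) (w : S → ℝ) :
    HasSum (fun t : ℕ => (1 - γ) * (γ ^ t * (stateMarginal P ρ0 π t ⬝ᵥ w)))
      (dVisit P ρ0 γ π ⬝ᵥ w) := by
  simpa only [dotProduct, Finset.mul_sum, mul_assoc] using
    hasSum_sum fun s (_ : s ∈ Finset.univ) => (hasSum_dVisit P ρ0 π hγ0 hγ1 s).mul_right (w s)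

lemma dVisit_nonneg (hγ0 : 0 ≤ γ) (hγ1 : γ < 1) (s : S) : 0 ≤ dVisit P ρ0 γ π s :=
  mul_nonneg (sub_nonneg.2 hγ1.le) <| tsum_nonneg fun t =>
    mul_nonneg (pow_nonneg hγ0 t) (stateMarginal_nonneg P ρ0 π t s)

lemma dVisit_flow (hγ0 : 0 ≤ γ) (hγ1 : γ < 1) :
    dVisit P ρ0 γ π = (1 - γ) • (fun s => (ρ0 s).toReal) +
      γ • (dVisit P ρ0 γ π ᵥ* policyTransition P π) := by
  funext s'
  have htail : HasSum (fun t : ℕ => (1 - γ) * (γ ^ (t + 1) * stateMarginal P ρ0 π (t + 1) s'))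
      (γ * (dVisit P ρ0 γ π ᵥ* policyTransition P π) s') := by
    refine ((hasSum_dVisit_dotProduct P ρ0 π hγ0 hγ1
      fun s => policyTransition P π s s').mul_left γ).congr_fun fun t => ?_
    rw [stateMarginal_succ, vecMul]
    ring
  simpa only [pow_zero, one_mul, stateMarginal, Pi.add_apply, Pi.smul_apply, smul_eq_mul] using
    (hasSum_dVisit P ρ0 π hγ0 hγ1 s').unique htail.zero_add

lemma dVisit_dotProduct_policyReward (hγ0 : 0 ≤ γ) (hγ1 : γ < 1) :
    dVisit P ρ0 γ π ⬝ᵥ policyReward π R = (1 - γ) * Jret P ρ0 γ π R := by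
  rw [← (hasSum_dVisit_dotProduct P ρ0 π hγ0 hγ1 (policyReward π R)).tsum_eq, tsum_mul_left]
  simp only [Jret, dotProduct, policyReward, Finset.mul_sum, mul_assoc]

lemma dVisit_dotProduct_meanTDError (hγ0 : 0 ≤ γ) (hγ1 : γ < 1) :
    dVisit P ρ0 γ π ⬝ᵥ meanTDError P γ π R f =
      (1 - γ) * (Jret P ρ0 γ π R - (fun s => (ρ0 s).toReal) ⬝ᵥ f) := by
  have hflow : dVisit P ρ0 γ π ⬝ᵥ f = (1 - γ) * ((fun s => (ρ0 s).toReal) ⬝ᵥ f) +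
      γ * (dVisit P ρ0 γ π ᵥ* policyTransition P π ⬝ᵥ f) := by
    conv_lhs => rw [dVisit_flow P ρ0 π hγ0 hγ1]
    rw [add_dotProduct, smul_dotProduct, smul_dotProduct, smul_eq_mul, smul_eq_mul]
  rw [meanTDError_eq, dotProduct_sub, dotProduct_add, dotProduct_smul, dotProduct_mulVec,
    dVisit_dotProduct_policyReward P ρ0 π R hγ0 hγ1, hflow, smul_eq_mul]
  ring

lemma one_sub_mul_Jret_sub_Jret (hγ0 : 0 ≤ γ) (hγ1 : γ < 1) :
    (1 - γ) * (Jret P ρ0 γ π' R - Jret P ρ0 γ π R) =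
      dVisit P ρ0 γ π ⬝ᵥ (meanTDError P γ π' R f - meanTDError P γ π R f) +
        (dVisit P ρ0 γ π' - dVisit P ρ0 γ π) ⬝ᵥ meanTDError P γ π' R f := by
  rw [dotProduct_sub, sub_dotProduct, dVisit_dotProduct_meanTDError P ρ0 π R f hγ0 hγ1,
    dVisit_dotProduct_meanTDError P ρ0 π' R f hγ0 hγ1]
  ring

lemma sum_abs_dVisit_sub_le (hγ0 : 0 ≤ γ) (hγ1 : γ < 1) :
    ∑ s, |dVisit P ρ0 γ π' s - dVisit P ρ0 γ π s| ≤
      2 * γ / (1 - γ) * ∑ s, dVisit P ρ0 γ π s * dTV π' π s := by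
  rw [div_mul_eq_mul_div, le_div_iff₀' (sub_pos.2 hγ1)]
  calc (1 - γ) * ∑ s, |dVisit P ρ0 γ π' s - dVisit P ρ0 γ π s|
      ≤ γ * ∑ s, |dVisit P ρ0 γ π s| *
          ∑ s', |policyTransition P π' s s' - policyTransition P π s s'| :=
        sum_abs_sub_le_of_discounted_flow hγ0 (fun s => (sum_abs_policyTransition P π' s).le)
          (dVisit_flow P ρ0 π hγ0 hγ1) (dVisit_flow P ρ0 π' hγ0 hγ1)
    _ ≤ γ * ∑ s, dVisit P ρ0 γ π s * (2 * dTV π' π s) := by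
        simp only [abs_of_nonneg (dVisit_nonneg P ρ0 π hγ0 hγ1 _)]
        gcongr with s
        · exact dVisit_nonneg P ρ0 π hγ0 hγ1 s
        · exact sum_abs_policyTransition_sub_le P π π' s
    _ = 2 * γ * ∑ s, dVisit P ρ0 γ π s * dTV π' π s := by
        simp only [mul_left_comm _ (2 : ℝ), ← Finset.mul_sum]
        ring

end PolicyEvaluation

open Matrix in
theorem tace_performance_lower_bound_general
    {S A : Type*} [Fintype S] [Fintype A]
    (P : S → A → PMF S) (ρ0 : PMF S) (γ : ℝ) (hγ0 : 0 ≤ γ) (hγ1 : γ < 1)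
    (π π' : S → PMF A) (hsupport : ∀ s, (π' s).support ⊆ (π s).support)
    (R : S → A → ℝ) (f : S → ℝ) :
    let δf : S → A → S → ℝ := fun s a s' => R s a + γ * f s' - f s
    let εf : ℝ :=
      ⨆ s : S, |∑ a : A, (π' s a).toReal * ∑ s' : S, (P s a s').toReal * δf s a s'|
    let Tf : ℝ := ∑ s : S, dVisit P ρ0 γ π s * ∑ a : A, (π s a).toReal *
        ∑ s' : S, (P s a s').toReal *
          (((π' s a).toReal / (π s a).toReal - 1) * δf s a s')
    Jret P ρ0 γ π' R - Jret P ρ0 γ π R ≥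
      Tf / (1 - γ) -
        (2 * γ * εf / (1 - γ) ^ 2) * ∑ s : S, dVisit P ρ0 γ π s * dTV π' π s := by
  intro δf εf Tf
  set V := ∑ s : S, dVisit P ρ0 γ π s * dTV π' π s
  set E := (dVisit P ρ0 γ π' - dVisit P ρ0 γ π) ⬝ᵥ meanTDError P γ π' R f
  have hγ : 0 < 1 - γ := sub_pos.2 hγ1
  have hTf : Tf = dVisit P ρ0 γ π ⬝ᵥ (meanTDError P γ π' R f - meanTDError P γ π R f) :=
    Finset.sum_congr rfl fun s _ => congrArg _
      (sum_importance_weighted_tdError_eq_sub P π π' R f (hsupport s))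
  have hεf : 0 ≤ εf := Real.iSup_nonneg fun _ => abs_nonneg _
  have hE : |E| ≤ 2 * γ / (1 - γ) * V * εf :=
    (abs_dotProduct_le_sum_abs_mul_iSup_abs _ _).trans <|
      mul_le_mul_of_nonneg_right (sum_abs_dVisit_sub_le P ρ0 π π' hγ0 hγ1) hεf
  calc Jret P ρ0 γ π' R - Jret P ρ0 γ π R
      = (Tf + E) / (1 - γ) := by
        rw [eq_div_iff hγ.ne', mul_comm, hTf, one_sub_mul_Jret_sub_Jret P ρ0 π π' R f hγ0 hγ1]
    _ ≥ (Tf - 2 * γ / (1 - γ) * V * εf) / (1 - γ) := by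
        gcongr
        linarith [neg_abs_le E]
    _ = Tf / (1 - γ) - 2 * γ * εf / (1 - γ) ^ 2 * V := by
        field_simp

/-- Theorem 1 (lower bound): performance bound of the trajectory-constrained
exploration strategy. -/
theorem tace_performance_lower_bound
    {S A : Type*} [Fintype S] [Fintype A] [Nonempty S] [Nonempty A]
    (P : S → A → PMF S) (ρ0 : PMF S) (γ : ℝ) (hγ0 : 0 ≤ γ) (hγ1 : γ < 1)
    (π π' : S → PMF A) (hπpos : ∀ s a, 0 < (π s a).toReal)
    (σ : ℝ) (hσ : 0 ≤ σ) (Re g : S → A → ℝ) (δ : ℝ) (f : S → ℝ) :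
    let Ri : S → A → ℝ := fun s a => min (g s a - δ) 0
    let R : S → A → ℝ := fun s a => Re s a + σ * Ri s a
    let δf : S → A → S → ℝ := fun s a s' => R s a + γ * f s' - f s
    let εf : ℝ :=
      ⨆ s : S, |∑ a : A, (π' s a).toReal * ∑ s' : S, (P s a s').toReal * δf s a s'|
    let Tf : ℝ := ∑ s : S, dVisit P ρ0 γ π s * ∑ a : A, (π s a).toReal *
        ∑ s' : S, (P s a s').toReal *
          (((π' s a).toReal / (π s a).toReal - 1) * δf s a s')
    Jret P ρ0 γ π' R - Jret P ρ0 γ π R ≥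
      Tf / (1 - γ) -
        (2 * γ * εf / (1 - γ) ^ 2) * ∑ s : S, dVisit P ρ0 γ π s * dTV π' π s := by
  exact tace_performance_lower_bound_general P ρ0 γ hγ0 hγ1 π π'
    (fun s a _ => (ENNReal.toReal_pos_iff.1 (hπpos s a)).1.ne') _ f
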